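/- arXiv:2404.06093 — 3 statements merged into one kernel-verified Lean document; each statement's English description precedes it below -/
import Mathlib

section
/- Let α, β ∈ (0,1) with β > α, and for each n set θ_n = (Φ⁻¹(1−α) − Φ⁻¹(1−β))/√(n σ²) (which lies in (0,1] for n large enough). Let Q_n be the law of an i.i.d. sample X_1, …, X_n with density (1−θ_n) f⁰ + θ_n f¹. Then Q_n(S_n(𝕏) ≥ √(σ²)·Φ⁻¹(1−α)/√n) converges to β as n → ∞; in particular the test has asymptotic power β against these local alternatives. -/
open MeasureTheory ProbabilityTheory Filter Finset
open scoped ENNReal NNReal Classical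

noncomputable section

/-- `f` is a probability density on `[0,1]^d` with respect to Lebesgue measure. -/
def IsDensityOn (d : ℕ) (f : (Fin d → ℝ) → ℝ) : Prop :=
  Measurable f ∧ (∀ x, 0 ≤ f x) ∧ (∀ x ∉ Set.Icc (0 : Fin d → ℝ) 1, f x = 0) ∧
    (∫ x, f x) = 1

/-- The law on `(Fin d → ℝ)` with Lebesgue density `f`. -/
def densityMeasure (d : ℕ) (f : (Fin d → ℝ) → ℝ) : Measure (Fin d → ℝ) :=
  MeasureTheory.volume.withDensity fun x => ENNReal.ofReal (f x)

/-- The derivative at `0` of `s ↦ E[X exp(i s X)]` is `i E[X²]`. -/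
lemma hasDerivAt_integral_mul_cexp_zero {Ω : Type*} [MeasurableSpace Ω] {P : Measure Ω}
    [IsFiniteMeasure P] {X : Ω → ℝ} (hX : Measurable X) (hX2 : MemLp X 2 P) :
    HasDerivAt (fun s : ℝ => ∫ x, (X x : ℂ) * Complex.exp (s * X x * Complex.I) ∂P)
      (((∫ x, X x ^ 2 ∂P : ℝ) : ℂ) * Complex.I) 0 := by
  have hint : Integrable X P := hX2.integrable (by norm_num)
  have hder := (hasDerivAt_integral_of_dominated_loc_of_deriv_le (μ := P) (x₀ := (0 : ℝ))
    (s := Set.univ) (bound := fun x => X x ^ 2)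
    (F := fun (s : ℝ) x => (X x : ℂ) * Complex.exp (s * X x * Complex.I))
    (F' := fun (s : ℝ) x =>
      (X x : ℂ) * (Complex.exp (s * X x * Complex.I) * (X x * Complex.I)))
    univ_mem ?_ ?_ ?_ ?_ hX2.integrable_sq ?_).2
  · refine hder.congr_deriv ?_
    rw [← integral_complex_ofReal, ← integral_mul_const]
    congr 1 with x
    simp
    ring
  · exact Eventually.of_forall fun s => by fun_prop
  · refine (hint.ofReal (𝕜 := ℂ)).congr (Eventually.of_forall fun x => ?_)
    simp
  · fun_prop
  · refine Eventually.of_forall fun x s _ => le_of_eq ?_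
    rw [norm_mul, norm_mul, norm_mul,
      show (s * X x * Complex.I : ℂ) = ((s * X x : ℝ) : ℂ) * Complex.I by push_cast; ring,
      Complex.norm_exp_ofReal_mul_I]
    simp [← sq]
  · refine Eventually.of_forall fun x s _ => ?_
    refine HasDerivAt.const_mul _ (HasDerivAt.cexp ?_)
    simpa [mul_assoc] using
      ((hasDerivAt_id s).ofReal_comp.mul_const (X x : ℂ)).mul_const Complex.I

open Topology in
/-- Characteristic functions of normalised sums under locally tilted laws converge to the
characteristic function of a shifted Gaussian. -/
lemma tendsto_integral_tilted_cexp_pow {Ω : Type*} [MeasurableSpace Ω] {P : Measure Ω}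
    [IsProbabilityMeasure P] {X : Ω → ℝ} (hX : Measurable X) (hX2 : MemLp X 2 P)
    (h0 : ∫ x, X x ∂P = 0) (h1 : ∫ x, X x ^ 2 ∂P = 1) (a t : ℝ) :
    Tendsto (fun n : ℕ => (∫ x, ((1 + a / √n * X x : ℝ) : ℂ) *
        Complex.exp ((((√n)⁻¹ * t : ℝ) : ℂ) * X x * Complex.I) ∂P) ^ n)
      atTop (𝓝 (Complex.exp (t * a * Complex.I - t ^ 2 / 2))) := by
  have hint : Integrable X P := hX2.integrable (by norm_num)
  have hs : Tendsto (fun n : ℕ => (√(n : ℝ))⁻¹) atTop (𝓝 0) :=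
    tendsto_inv_atTop_zero.comp <| Real.tendsto_sqrt_atTop.comp tendsto_natCast_atTop_atTop
  have hexp (s : ℝ) : Integrable (fun x => Complex.exp (s * X x * Complex.I)) P := by
    refine Integrable.of_bound (C := 1) (by fun_prop) (Eventually.of_forall fun x => ?_)
    rw [show (s * X x * Complex.I : ℂ) = ((s * X x : ℝ) : ℂ) * Complex.I by push_cast; ring,
      Complex.norm_exp_ofReal_mul_I]
  have hXexp (s : ℝ) : Integrable (fun x => (X x : ℂ) * Complex.exp (s * X x * Complex.I)) P := by
    refine hint.ofReal.mul_bdd (c := 1) (by fun_prop) (Eventually.of_forall fun x => ?_)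
    rw [show (s * X x * Complex.I : ℂ) = ((s * X x : ℝ) : ℂ) * Complex.I by push_cast; ring,
      Complex.norm_exp_ofReal_mul_I]
  have hsplit (b s : ℝ) : ∫ x, ((1 + b * X x : ℝ) : ℂ) *
        Complex.exp (s * X x * Complex.I) ∂P =
      charFun (P.map X) s + b * ∫ x, (X x : ℂ) * Complex.exp (s * X x * Complex.I) ∂P := by
    rw [charFun_apply_real, integral_map hX.aemeasurable (by fun_prop), ← integral_const_mul,
      ← integral_add (hexp s) ((hXexp s).const_mul _)]
    congr 1 with x
    push_cast
    ring
  have hchar : Tendsto (fun n : ℕ => (n : ℂ) * (charFun (P.map X) ((√n)⁻¹ * t) - 1)) atTop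
      (𝓝 (-(t ^ 2 / 2))) := by
    have ht : Tendsto (fun n : ℕ => (√(n : ℝ))⁻¹ * t) atTop (𝓝 0) := by
      simpa using hs.mul_const t
    have ho := (taylor_charFun_two (P := P) hX.aemeasurable h0 (by simpa using h1)).comp_tendsto ht
    have ho' : (fun n : ℕ => charFun (P.map X) ((√n)⁻¹ * t) -
        (1 - (((√n)⁻¹ * t : ℝ) : ℂ) ^ 2 / 2)) =o[atTop] fun n : ℕ => ((n : ℝ))⁻¹ := by
      refine Asymptotics.IsLittleO.of_const_mul_right (c := t ^ 2) ?_
      refine ho.congr_right fun n => ?_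
      simp [mul_pow, mul_comm]
    have hz := ho'.tendsto_inv_smul_nhds_zero
    rw [tendsto_iff_norm_sub_tendsto_zero]
    refine (tendsto_zero_iff_norm_tendsto_zero.1 hz).congr' ?_
    filter_upwards [eventually_gt_atTop 0] with n hn
    congr 1
    have hn' : (n : ℂ) ≠ 0 := by exact_mod_cast hn.ne'
    have hsq : ((√(n : ℝ) : ℝ) : ℂ) ^ 2 = n := by
      rw [← Complex.ofReal_pow, Real.sq_sqrt (Nat.cast_nonneg n)]; simp
    simp only [inv_inv, Complex.real_smul, Complex.ofReal_mul, Complex.ofReal_inv,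
      mul_pow, inv_pow, hsq, Complex.ofReal_natCast]
    field_simp
    ring
  have hder : Tendsto (fun n : ℕ => (√(n : ℝ) : ℂ) * ∫ x, (X x : ℂ) *
      Complex.exp ((((√n)⁻¹ * t : ℝ) : ℂ) * X x * Complex.I) ∂P) atTop (𝓝 (t * Complex.I)) := by
    have hd := hasDerivAt_integral_mul_cexp_zero hX hX2
    rw [h1] at hd
    have hd' := HasDerivAt.scomp (h := fun s : ℝ => s * t) (h' := t) 0 (by simpa using hd)
      (by simpa using (hasDerivAt_id (0 : ℝ)).mul_const t)
    have hslope := (hasDerivAt_iff_tendsto_slope_zero.1 hd').comp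
      (tendsto_nhdsWithin_iff.2 ⟨hs, by
        filter_upwards [eventually_gt_atTop 0] with n hn
        have : 0 < √(n : ℝ) := Real.sqrt_pos.2 (by exact_mod_cast hn)
        simpa using hn.ne'⟩)
    simpa [Function.comp_def, integral_complex_ofReal, h0] using hslope
  refine (Complex.tendsto_one_add_pow_exp_of_tendsto (g := fun n : ℕ =>
    (∫ x, ((1 + a / √n * X x : ℝ) : ℂ) *
        Complex.exp ((((√n)⁻¹ * t : ℝ) : ℂ) * X x * Complex.I) ∂P) - 1) ?_).congr
    fun n => by rw [add_sub_cancel]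
  have hsum := hchar.add (hder.const_mul (a : ℂ))
  rw [show (t * a * Complex.I - t ^ 2 / 2 : ℂ) = -(t ^ 2 / 2) + a * (t * Complex.I) by ring]
  refine hsum.congr' ?_
  filter_upwards [eventually_gt_atTop 0] with n hn
  have hsqrt : ((√(n : ℝ) : ℝ) : ℂ) ≠ 0 := by
    exact_mod_cast (Real.sqrt_pos.2 (by exact_mod_cast hn : (0 : ℝ) < n)).ne'
  have hsq : (n : ℂ) = ((√(n : ℝ) : ℝ) : ℂ) ^ 2 := by
    rw [← Complex.ofReal_pow, Real.sq_sqrt (Nat.cast_nonneg n)]; simp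
  rw [hsplit, hsq]
  set ψ := ∫ x, (X x : ℂ) * Complex.exp ((((√n)⁻¹ * t : ℝ) : ℂ) * X x * Complex.I) ∂P
  push_cast
  field_simp
  ring

/-- The characteristic function of a scaled sum of i.i.d. coordinates. -/
lemma charFun_map_pi_const_mul_sum {Ω : Type*} [MeasurableSpace Ω] {μ : Measure Ω}
    [IsProbabilityMeasure μ] {X : Ω → ℝ} (hX : Measurable X) (n : ℕ) (r t : ℝ) :
    charFun ((Measure.pi fun _ : Fin n => μ).map fun v => r * ∑ i, X (v i)) t =
      charFun (μ.map X) (r * t) ^ n := by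
  have hcoord (i : Fin n) : Measurable fun v : Fin n → Ω => X (v i) :=
    hX.comp (measurable_pi_apply i)
  have hsum : Measurable fun v : Fin n → Ω => ∑ i, X (v i) :=
    Finset.measurable_sum _ fun i _ => hcoord i
  rw [charFun_map_mul_comp hsum.aemeasurable,
    (iIndepFun_pi (μ := fun _ : Fin n => μ) (X := fun _ => X)
      fun _ => hX.aemeasurable).charFun_map_fun_sum_eq_prod (fun i => (hcoord i).aemeasurable)]
  have hmap (i : Fin n) :
      (Measure.pi fun _ : Fin n => μ).map (fun v => X (v i)) = μ.map X := by
    have hcomp := Measure.map_map (μ := Measure.pi fun _ : Fin n => μ) hX (measurable_pi_apply i)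
    rw [(measurePreserving_eval (fun _ : Fin n => μ) i).map_eq] at hcomp
    exact hcomp.symm
  simp [hmap]

open Topology in
/-- Lévy continuity and the portmanteau theorem for measures that are eventually
probability measures. -/
lemma tendsto_measure_of_tendsto_charFun {μ : ℕ → Measure ℝ} {ν : Measure ℝ}
    [IsProbabilityMeasure ν] (hμ : ∀ᶠ n in atTop, IsProbabilityMeasure (μ n))
    (h : ∀ t, Tendsto (fun n => charFun (μ n) t) atTop (𝓝 (charFun ν t))) {s : Set ℝ}
    (hs : ν (frontier s) = 0) : Tendsto (fun n => μ n s) atTop (𝓝 (ν s)) := by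
  let μ' : ℕ → ProbabilityMeasure ℝ := fun n =>
    if hn : IsProbabilityMeasure (μ n) then ⟨μ n, hn⟩ else ⟨ν, inferInstance⟩
  have hμ' : ∀ᶠ n in atTop, (μ' n : Measure ℝ) = μ n := by
    filter_upwards [hμ] with n hn
    simp [μ', hn]
  have hlim : Tendsto μ' atTop (𝓝 (⟨ν, inferInstance⟩ : ProbabilityMeasure ℝ)) := by
    refine ProbabilityMeasure.tendsto_of_tendsto_charFun fun t => (h t).congr' ?_
    filter_upwards [hμ'] with n hn
    rw [hn]
  refine (ProbabilityMeasure.tendsto_measure_of_null_frontier_of_tendsto' hlim hs).congr' ?_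
  filter_upwards [hμ'] with n hn
  rw [hn]

open Topology in
/-- Central limit theorem under local alternatives: if `X` is standardised under `P` and `P' n`
has density `1 + a / √n * X` with respect to `P`, then the normalised sum of `n` i.i.d. copies
under `P' n` is asymptotically Gaussian with mean `a` and unit variance. -/
lemma tendsto_pi_tilted_gaussianReal_Ici {Ω : Type*} [MeasurableSpace Ω] {P : Measure Ω}
    [IsProbabilityMeasure P] {X : Ω → ℝ} (hX : Measurable X) (hX2 : MemLp X 2 P)
    (h0 : ∫ x, X x ∂P = 0) (h1 : ∫ x, X x ^ 2 ∂P = 1) (a q : ℝ) {P' : ℕ → Measure Ω}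
    (hprob : ∀ᶠ n in atTop, IsProbabilityMeasure (P' n))
    (hP' : ∀ᶠ n : ℕ in atTop, ∀ F : Ω → ℂ,
      ∫ x, F x ∂(P' n) = ∫ x, ((1 + a / √n * X x : ℝ) : ℂ) * F x ∂P) :
    Tendsto (fun n : ℕ => (Measure.pi fun _ : Fin n => P' n)
      {v | q ≤ (√n)⁻¹ * ∑ i, X (v i)}) atTop (𝓝 (gaussianReal a 1 (Set.Ici q))) := by
  have hmeas (n : ℕ) : Measurable fun v : Fin n → Ω => (√n)⁻¹ * ∑ i, X (v i) := by fun_prop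
  have key := tendsto_measure_of_tendsto_charFun (ν := gaussianReal a 1) (s := Set.Ici q)
    (μ := fun n : ℕ => (Measure.pi fun _ : Fin n => P' n).map fun v => (√n)⁻¹ * ∑ i, X (v i))
    ?_ (fun t => ?_) ?_
  · refine key.congr fun n => ?_
    rw [Measure.map_apply (hmeas n) measurableSet_Ici]
    rfl
  · filter_upwards [hprob] with n hn
    exact Measure.isProbabilityMeasure_map (hmeas n).aemeasurable
  · rw [charFun_gaussianReal]
    simp only [NNReal.coe_one, Complex.ofReal_one, one_mul]
    refine (tendsto_integral_tilted_cexp_pow hX hX2 h0 h1 a t).congr' ?_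
    filter_upwards [hprob, hP'] with n hn hF
    rw [charFun_map_pi_const_mul_sum hX, charFun_apply_real,
      integral_map hX.aemeasurable (by fun_prop), hF]
  · have := nullSingletonClass_gaussianReal (μ := a) (v := 1) one_ne_zero
    simp

/-- The law of a shifted Gaussian on an upper half-line, in terms of the standard Gaussian. -/
lemma gaussianReal_sub_Ici_toReal {p q b : ℝ}
    (hq : gaussianReal 0 1 (Set.Iic q) = ENNReal.ofReal (1 - b)) (hb : b ≤ 1) :
    (gaussianReal (p - q) 1 (Set.Ici p)).toReal = b := by
  have := nullSingletonClass_gaussianReal (μ := 0) (v := 1) one_ne_zero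
  have hmap := gaussianReal_map_const_add (μ := 0) (v := 1) (p - q)
  rw [zero_add] at hmap
  rw [← hmap, Measure.map_apply (by fun_prop) measurableSet_Ici]
  have hset : (fun x => p - q + x) ⁻¹' Set.Ici p = Set.Ici q := by
    ext x
    simp only [Set.mem_preimage, Set.mem_Ici]
    constructor <;> intro h <;> linarith
  rw [hset, measure_congr Ioi_ae_eq_Ici.symm, ← Set.compl_Iic]
  change (gaussianReal 0 1).real (Set.Iic q)ᶜ = b
  rw [probReal_compl_eq_one_sub measurableSet_Iic, measureReal_def, hq,
    ENNReal.toReal_ofReal (by linarith)]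
  ring

lemma IsDensityOn.integrable {d : ℕ} {f : (Fin d → ℝ) → ℝ} (hf : IsDensityOn d f) :
    Integrable f :=
  .of_integral_ne_zero (by rw [hf.2.2.2]; exact one_ne_zero)

lemma IsDensityOn.isProbabilityMeasure {d : ℕ} {f : (Fin d → ℝ) → ℝ} (hf : IsDensityOn d f) :
    IsProbabilityMeasure (densityMeasure d f) := by
  refine ⟨?_⟩
  rw [densityMeasure, withDensity_apply _ MeasurableSet.univ, Measure.restrict_univ,
    ← ofReal_integral_eq_lintegral_ofReal hf.integrable (Eventually.of_forall hf.2.1), hf.2.2.2,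
    ENNReal.ofReal_one]

/-- A convex combination of densities is a density. -/
lemma IsDensityOn.mix {d : ℕ} {f g : (Fin d → ℝ) → ℝ} (hf : IsDensityOn d f)
    (hg : IsDensityOn d g) {c : ℝ} (hc : c ∈ Set.Icc (0 : ℝ) 1) :
    IsDensityOn d fun x => (1 - c) * f x + c * g x := by
  refine ⟨(hf.1.const_mul _).add (hg.1.const_mul _), fun x => ?_, fun x hx => ?_, ?_⟩
  · exact add_nonneg (mul_nonneg (sub_nonneg.2 hc.2) (hf.2.1 x)) (mul_nonneg hc.1 (hg.2.1 x))
  · simp [hf.2.2.1 x hx, hg.2.2.1 x hx]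
  · rw [integral_add (hf.integrable.const_mul _) (hg.integrable.const_mul _),
      integral_const_mul, integral_const_mul, hf.2.2.2, hg.2.2.2]
    ring

lemma integral_densityMeasure {d : ℕ} {f : (Fin d → ℝ) → ℝ} (hf : IsDensityOn d f)
    {E : Type*} [NormedAddCommGroup E] [NormedSpace ℝ E] (F : (Fin d → ℝ) → E) :
    ∫ x, F x ∂(densityMeasure d f) = ∫ x, f x • F x := by
  rw [densityMeasure, integral_withDensity_eq_integral_toReal_smul hf.1.ennreal_ofReal
    (Eventually.of_forall fun x => ENNReal.ofReal_lt_top)]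
  simp only [ENNReal.toReal_ofReal (hf.2.1 _)]

/-- under the local alternatives
`θ_n = (Φ⁻¹(1-α) - Φ⁻¹(1-β))/√(n σ²)`, the rejection probability of the test
`S_n(𝕏) ≥ √σ² ⬝ Φ⁻¹(1-α)/√n` converges to `β`.  `Q n` is the law of an i.i.d.
sample of size `n` with density `(1-θ_n) f⁰ + θ_n f¹`, realized as a product measure. -/
theorem stmt_1
    (d : ℕ) (hd : 0 < d)
    (f0 f1 : (Fin d → ℝ) → ℝ)
    (hf0 : IsDensityOn d f0) (hf1 : IsDensityOn d f1)
    (hpos0 : ∀ x ∈ Set.Icc (0 : Fin d → ℝ) 1, 0 < f0 x)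
    (hpos1 : ∀ x ∈ Set.Icc (0 : Fin d → ℝ) 1, 0 < f1 x)
    (σ2 : ℝ)
    (hσ2int : IntegrableOn (fun x => (f1 x / f0 x - 1) ^ 2 * f0 x)
      (Set.Icc (0 : Fin d → ℝ) 1) volume)
    (hσ2 : σ2 = ∫ x in Set.Icc (0 : Fin d → ℝ) 1, (f1 x / f0 x - 1) ^ 2 * f0 x)
    (hσ2pos : 0 < σ2)
    (α β : ℝ) (hα : α ∈ Set.Ioo (0 : ℝ) 1) (hβ : β ∈ Set.Ioo (0 : ℝ) 1) (hαβ : α < β)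
    (qα : ℝ) (hqα : (gaussianReal 0 1) (Set.Iic qα) = ENNReal.ofReal (1 - α))
    (qβ : ℝ) (hqβ : (gaussianReal 0 1) (Set.Iic qβ) = ENNReal.ofReal (1 - β))
    (θ : ℕ → ℝ) (hθ : ∀ n : ℕ, θ n = (qα - qβ) / Real.sqrt (n * σ2))
    (Q : (n : ℕ) → Measure (Fin n → (Fin d → ℝ)))
    (hQ : ∀ n : ℕ, Q n = Measure.pi (fun _ : Fin n =>
      densityMeasure d (fun x => (1 - θ n) * f0 x + θ n * f1 x)))
    (S : (n : ℕ) → (Fin n → (Fin d → ℝ)) → ℝ)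
    (hS : ∀ (n : ℕ) (v : Fin n → (Fin d → ℝ)),
      S n v = (1 / (n : ℝ)) * ∑ i : Fin n, (f1 (v i) / f0 (v i) - 1)) :
    Filter.Tendsto
      (fun n : ℕ => ((Q n) {v | S n v ≥ Real.sqrt σ2 * qα / Real.sqrt n}).toReal)
      Filter.atTop (nhds β) := by
  have : IsProbabilityMeasure (densityMeasure d f0) := hf0.isProbabilityMeasure
  have hσ : 0 < √σ2 := Real.sqrt_pos.2 hσ2pos
  have hmul (x : Fin d → ℝ) : f0 x * (f1 x / f0 x - 1) = f1 x - f0 x := by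
    by_cases hx : x ∈ Set.Icc (0 : Fin d → ℝ) 1
    · have := (hpos0 x hx).ne'
      field_simp
    · simp [hf0.2.2.1 x hx, hf1.2.2.1 x hx]
  let X : (Fin d → ℝ) → ℝ := fun x => (f1 x / f0 x - 1) / √σ2
  have hX : Measurable X := ((hf1.1.div hf0.1).sub_const 1).div_const _
  have h0 : ∫ x, X x ∂(densityMeasure d f0) = 0 := by
    simp only [X]
    rw [integral_div, integral_densityMeasure hf0]
    simp only [smul_eq_mul, hmul]
    rw [integral_sub hf1.integrable hf0.integrable, hf1.2.2.2, hf0.2.2.2]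
    simp
  have h1 : ∫ x, X x ^ 2 ∂(densityMeasure d f0) = 1 := by
    simp only [X, div_pow, Real.sq_sqrt hσ2pos.le]
    rw [integral_div, integral_densityMeasure hf0,
      ← setIntegral_eq_integral_of_forall_compl_eq_zero (s := Set.Icc (0 : Fin d → ℝ) 1)
      fun x hx => by simp [hf0.2.2.1 x hx]]
    simp_rw [smul_eq_mul, mul_comm (f0 _)]
    rw [← hσ2, div_self hσ2pos.ne']
  have hX2 : MemLp X 2 (densityMeasure d f0) :=
    (memLp_two_iff_integrable_sq hX.aestronglyMeasurable).2
      (.of_integral_ne_zero (by rw [h1]; exact one_ne_zero))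
  have hq : 0 ≤ qα - qβ := by
    by_contra! hlt
    have hle := measure_mono (μ := gaussianReal 0 1) (Set.Iic_subset_Iic.2 (by linarith : qα ≤ qβ))
    rw [hqα, hqβ, ENNReal.ofReal_le_ofReal_iff (by linarith [hβ.2])] at hle
    linarith
  have hθ_eq (n : ℕ) : θ n = (qα - qβ) / √n / √σ2 := by
    rw [hθ, Real.sqrt_mul (Nat.cast_nonneg n), div_div]
  have hθ_mem : ∀ᶠ n in atTop, θ n ∈ Set.Icc (0 : ℝ) 1 := by
    have hlim : Tendsto θ atTop (nhds 0) := by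
      have := ((Real.tendsto_sqrt_atTop.comp
        tendsto_natCast_atTop_atTop).const_div_atTop (qα - qβ)).div_const √σ2
      simpa [hθ_eq, Function.comp_def, funext hθ_eq] using this
    filter_upwards [hlim.eventually (eventually_le_nhds zero_lt_one)] with n hn
    exact ⟨by rw [hθ]; positivity, hn⟩
  have key := tendsto_pi_tilted_gaussianReal_Ici hX hX2 h0 h1 (qα - qβ) qα
    (P' := fun n => densityMeasure d fun x => (1 - θ n) * f0 x + θ n * f1 x)
    (hθ_mem.mono fun n hn => (hf0.mix hf1 hn).isProbabilityMeasure)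
    (hθ_mem.mono fun n hn F => by
      rw [integral_densityMeasure (hf0.mix hf1 hn), integral_densityMeasure hf0]
      congr 1 with x
      have hdens : (1 - θ n) * f0 x + θ n * f1 x =
          f0 x * (1 + (qα - qβ) / √n * X x) := by
        have hX_eq : (qα - qβ) / √n * X x = θ n * (f1 x / f0 x - 1) := by
          rw [hθ_eq]
          simp only [X]
          ring
        rw [hX_eq]
        linear_combination (-θ n) * hmul x
      rw [hdens, Complex.real_smul, Complex.real_smul]
      push_cast
      ring)
  have hlim := (ENNReal.tendsto_toReal (measure_ne_top _ _)).comp key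
  rw [gaussianReal_sub_Ici_toReal hqβ hβ.2.le] at hlim
  refine hlim.congr' ?_
  filter_upwards [eventually_gt_atTop 0] with n hn
  have hn' : 0 < √(n : ℝ) := Real.sqrt_pos.2 (by exact_mod_cast hn)
  rw [Function.comp_apply, hQ]
  congr 2 with v
  simp only [Set.mem_ofPred_eq, hS, X, ← Finset.sum_div, ge_iff_le]
  have hsq : (n : ℝ) = √n * √n := (Real.mul_self_sqrt (Nat.cast_nonneg n)).symm
  rw [show (1 / (n : ℝ)) * ∑ i, (f1 (v i) / f0 (v i) - 1) =
      (√σ2 / √n) * ((√n)⁻¹ * ((∑ i, (f1 (v i) / f0 (v i) - 1)) / √σ2)) by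
        rw [hsq, Real.sqrt_mul_self (Real.sqrt_nonneg _)]; field_simp,
    mul_div_right_comm, mul_le_mul_iff_of_pos_left (div_pos hσ hn')]
end
end

section
/- Assume n¹ ≤ n⁰ and ε⁰, ε¹ ≤ 1, and assume the deterministic inequalities |N^a_k/n^a − h^a_k| ≤ √(2u h^a_k/n^a) + u/(3n^a) hold for all k ≤ K and a ∈ {0,1}. Then for a ∈ {0,1}: (i) for every k ∈ Ω^a ∪ Ω⁰¹ one has h^a_k ≤ ĥ^a_k; (ii) for every k ∉ Ω^a ∪ Ω⁰¹ one has |h^a_k − ĥ^a_k| ≤ √(10u ĥ^a_k/n^a) and |h^a_k − ĥ^a_k| ≤ 2 ĥ^a_k. (Here Ω^a denotes Ω⁰ when a = 0 and Ω¹ when a = 1.) -/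
open MeasureTheory ProbabilityTheory Filter Finset
open scoped ENNReal NNReal Classical

noncomputable section

/-- `B` is a measurable partition of `[0,1]^d` into `K` bins. -/
def IsPartitionOn (d K : ℕ) (B : Fin K → Set (Fin d → ℝ)) : Prop :=
  (∀ k, MeasurableSet (B k)) ∧ Pairwise (Function.onFun Disjoint B) ∧
    (⋃ k, B k) = Set.Icc (0 : Fin d → ℝ) 1

/-- If the empirical frequency `p` is at most a threshold `e ≥ 3v`, a Bernstein-type deviation
inequality bounds the true frequency `h` by `3e`. -/
lemma le_three_mul_of_bernstein {v p h e : ℝ} (hv : 0 < v) (hh : 0 ≤ h) (hve : 3 * v ≤ e)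
    (hpe : p ≤ e) (hdev : |p - h| ≤ √(2 * v * h) + v / 3) : h ≤ 3 * e := by
  have hlow := (abs_le.mp hdev).1
  by_contra! hlt
  have hroot : √(2 * v * h) ≤ h / 2 := by
    apply Real.sqrt_le_iff.mpr ⟨by positivity, ?_⟩
    nlinarith
  nlinarith

/-- If the empirical frequency `p` is at least `3v`, a Bernstein-type deviation inequality holds
with `p` in place of the true frequency `h`. -/
lemma abs_sub_le_sqrt_of_bernstein {v p h : ℝ} (hv : 0 < v) (hh : 0 ≤ h) (hvp : 3 * v ≤ p)
    (hdev : |p - h| ≤ √(2 * v * h) + v / 3) : |h - p| ≤ √(10 * v * p) := by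
  have hp : 0 < p := by linarith
  have hs : √(2 * v * h) ^ 2 = 2 * v * h := Real.sq_sqrt (by positivity)
  have hr : √(10 * v * p) ^ 2 = 10 * v * p := Real.sq_sqrt (by positivity)
  have hr5 : 5 * v ≤ √(10 * v * p) := Real.le_sqrt_of_sq_le (by nlinarith)
  have hr3 : √(10 * v * p) ≤ 3 * p :=
    Real.sqrt_le_iff.mpr ⟨by positivity, by nlinarith⟩
  generalize √(2 * v * h) = s at *
  generalize √(10 * v * p) = r at *
  by_contra! hlt
  have hsq : (|h - p| - v / 3) ^ 2 ≤ 2 * v * h := by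
    rw [← hs]
    rw [abs_sub_comm] at hdev
    exact pow_le_pow_left₀ (by linarith) (by linarith) 2
  have hhle : h ≤ p + |h - p| := by linarith [le_abs_self (h - p)]
  generalize |h - p| = D at *
  nlinarith [mul_pos (sub_pos.mpr hlt) (show 0 < D + r - 8 / 3 * v by linarith),
    mul_le_mul_of_nonneg_left hhle hv.le, mul_le_mul_of_nonneg_left hr3 hv.le, pow_pos hv 2]

/-- If the empirical frequency `p` is at least `3v`, a Bernstein-type deviation inequality bounds
the relative error by `2`. -/
lemma abs_sub_le_two_mul_of_bernstein {v p h : ℝ} (hv : 0 < v) (hh : 0 ≤ h) (hvp : 3 * v ≤ p)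
    (hdev : |p - h| ≤ √(2 * v * h) + v / 3) : |h - p| ≤ 2 * p :=
  (abs_sub_le_sqrt_of_bernstein hv hh hvp hdev).trans
    (Real.sqrt_le_iff.mpr ⟨by linarith, by nlinarith⟩)

/-- deterministic error bounds for the thresholded histogram estimators,
under the Bernstein-type deviation inequalities on the empirical frequencies:
(i) on thresholded bins `h^a_k ≤ ĥ^a_k`; (ii) on the other bins
`|h^a_k − ĥ^a_k| ≤ √(10u ĥ^a_k/n^a)` and `|h^a_k − ĥ^a_k| ≤ 2ĥ^a_k`. -/
theorem stmt_14
    (d K n n0 n1 : ℕ) (hd : 0 < d) (hK : 0 < K) (hn : 0 < n) (hn0 : 0 < n0) (hn1 : 0 < n1)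
    (hn10 : n1 ≤ n0)
    (f0 f1 : (Fin d → ℝ) → ℝ) (hf0 : IsDensityOn d f0) (hf1 : IsDensityOn d f1)
    (B : Fin K → Set (Fin d → ℝ)) (hB : IsPartitionOn d K B)
    (h0 h1 : Fin K → ℝ)
    (hh0 : ∀ k, h0 k = ∫ x in B k, f0 x) (hh1 : ∀ k, h1 k = ∫ x in B k, f1 x)
    (N0 N1 : Fin K → ℝ) (hN0pos : ∀ k, 0 ≤ N0 k) (hN1pos : ∀ k, 0 ≤ N1 k)
    (u t : ℝ) (hu : 0 < u) (ht : 0 < t)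
    (ε0 ε1 : ℝ) (hε0 : ε0 = max (3 * u / n0) (t / n)) (hε1 : ε1 = Real.sqrt (3 * u / n1))
    (hε0le : ε0 ≤ 1) (hε1le : ε1 ≤ 1)
    (Om0 Om01 Om1 : Finset (Fin K))
    (hOm0 : ∀ k, k ∈ Om0 ↔ (ε1 < N1 k / n1 ∧ N0 k / n0 ≤ ε0))
    (hOm01 : ∀ k, k ∈ Om01 ↔ (N1 k / n1 ≤ ε1 ∧ N0 k / n0 ≤ ε1))
    (hOm1 : ∀ k, k ∈ Om1 ↔ (N1 k / n1 ≤ ε1 ∧ ε1 < N0 k / n0))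
    (h0hat h1hat : Fin K → ℝ)
    (hh0hat : ∀ k, h0hat k =
      if k ∈ Om0 then 3 * ε0 else if k ∈ Om01 then 3 * ε1 else N0 k / n0)
    (hh1hat : ∀ k, h1hat k = if k ∈ Om1 ∪ Om01 then 3 * ε1 else N1 k / n1)
    (hdev0 : ∀ k, |N0 k / n0 - h0 k| ≤ Real.sqrt (2 * u * h0 k / n0) + u / (3 * n0))
    (hdev1 : ∀ k, |N1 k / n1 - h1 k| ≤ Real.sqrt (2 * u * h1 k / n1) + u / (3 * n1)) :
    (∀ k ∈ Om0 ∪ Om01, h0 k ≤ h0hat k) ∧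
    (∀ k ∈ Om1 ∪ Om01, h1 k ≤ h1hat k) ∧
    (∀ k, k ∉ Om0 ∪ Om01 →
      |h0 k - h0hat k| ≤ Real.sqrt (10 * u * h0hat k / n0) ∧
      |h0 k - h0hat k| ≤ 2 * h0hat k) ∧
    (∀ k, k ∉ Om1 ∪ Om01 →
      |h1 k - h1hat k| ≤ Real.sqrt (10 * u * h1hat k / n1) ∧
      |h1 k - h1hat k| ≤ 2 * h1hat k) := by
  have hn0R : (0 : ℝ) < n0 := by exact_mod_cast hn0
  have hn1R : (0 : ℝ) < n1 := by exact_mod_cast hn1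
  have hnR : (n1 : ℝ) ≤ n0 := by exact_mod_cast hn10
  have hv0 : 0 < u / n0 := by positivity
  have hv1 : 0 < u / n1 := by positivity
  have hv01 : u / n0 ≤ u / n1 := div_le_div_of_nonneg_left hu.le hn1R hnR
  have hh0nn k : 0 ≤ h0 k := by
    rw [hh0]
    exact integral_nonneg hf0.2.1
  have hh1nn k : 0 ≤ h1 k := by
    rw [hh1]
    exact integral_nonneg hf1.2.1
  have hb0 k : |N0 k / n0 - h0 k| ≤ √(2 * (u / n0) * h0 k) + u / n0 / 3 := by
    convert hdev0 k using 2
    · congr 1; ring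
    · field_simp
  have hb1 k : |N1 k / n1 - h1 k| ≤ √(2 * (u / n1) * h1 k) + u / n1 / 3 := by
    convert hdev1 k using 2
    · congr 1; ring
    · field_simp
  have hε0v : 3 * (u / n0) ≤ ε0 := by
    rw [hε0, ← mul_div_assoc]
    exact le_max_left _ _
  have hε1v : 3 * (u / n1) ≤ ε1 := by
    have hsq : ε1 ^ 2 = 3 * u / n1 := by rw [hε1, Real.sq_sqrt (by positivity)]
    have hε1nn : 0 ≤ ε1 := hε1 ▸ Real.sqrt_nonneg _
    rw [← mul_div_assoc, ← hsq]
    nlinarith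
  refine ⟨fun k hk => ?_, fun k hk => ?_, fun k hk => ?_, fun k hk => ?_⟩
  · rw [hh0hat]
    split_ifs with hk0 hk01
    · exact le_three_mul_of_bernstein hv0 (hh0nn k) hε0v ((hOm0 k).mp hk0).2 (hb0 k)
    · exact le_three_mul_of_bernstein hv0 (hh0nn k) (by linarith) ((hOm01 k).mp hk01).2 (hb0 k)
    · exact absurd hk (by simp [hk0, hk01])
  · rw [hh1hat, if_pos hk]
    refine le_three_mul_of_bernstein hv1 (hh1nn k) hε1v ?_ (hb1 k)
    rcases Finset.mem_union.mp hk with hk | hk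
    · exact ((hOm1 k).mp hk).1
    · exact ((hOm01 k).mp hk).1
  · rw [Finset.mem_union, not_or] at hk
    have hp : 3 * (u / n0) ≤ N0 k / n0 := by
      rw [hOm0, hOm01] at hk
      by_contra! hlt
      rcases lt_or_ge ε1 (N1 k / n1) with hN1 | hN1
      · exact hk.1 ⟨hN1, by linarith⟩
      · exact hk.2 ⟨hN1, by linarith⟩
    rw [hh0hat, if_neg hk.1, if_neg hk.2,
      show 10 * u * (N0 k / n0) / n0 = 10 * (u / n0) * (N0 k / n0) by ring]
    exact ⟨abs_sub_le_sqrt_of_bernstein hv0 (hh0nn k) hp (hb0 k),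
      abs_sub_le_two_mul_of_bernstein hv0 (hh0nn k) hp (hb0 k)⟩
  · have hp : 3 * (u / n1) ≤ N1 k / n1 := by
      rw [Finset.mem_union, not_or, hOm1, hOm01] at hk
      by_contra! hlt
      rcases lt_or_ge ε1 (N0 k / n0) with hN0 | hN0
      · exact hk.1 ⟨by linarith, hN0⟩
      · exact hk.2 ⟨by linarith, hN0⟩
    rw [hh1hat, if_neg hk,
      show 10 * u * (N1 k / n1) / n1 = 10 * (u / n1) * (N1 k / n1) by ring]
    exact ⟨abs_sub_le_sqrt_of_bernstein hv1 (hh1nn k) hp (hb1 k),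
      abs_sub_le_two_mul_of_bernstein hv1 (hh1nn k) hp (hb1 k)⟩
end
end

section
/- Let u > 0, let m > 0 be a real number, and let h ≥ 0 and ν ≥ 0 be real numbers. If |ν − h| ≤ √(2uh/m) + u/(3m), then ν − √(2uν/m) ≤ h ≤ ν + √(2uν/m) + 3u/m. -/
/-- Square-root form of the lower confidence bound. -/
lemma sq_sub_two_mul_le_sq {d s t : ℝ} (hd : 0 ≤ d) (hs : 0 ≤ s) (ht : 0 ≤ t)
    (hts : t ^ 2 - s ^ 2 ≤ 2 * d * s + 2 * d ^ 2 / 3) :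
    t ^ 2 - 2 * d * t ≤ s ^ 2 := by
  have hle : t ≤ s + d := by
    refine le_of_sq_le_sq ?_ (by positivity)
    nlinarith [sq_nonneg d]
  rcases le_total t d with htd | htd
  · nlinarith [mul_nonneg ht (sub_nonneg.2 htd), mul_nonneg ht hd, sq_nonneg s]
  · have hsq : (t - d) ^ 2 ≤ s ^ 2 := pow_le_pow_left₀ (by linarith) (by linarith) 2
    nlinarith [sq_nonneg d]

/-- Square-root form of the upper confidence bound. -/
lemma sq_le_sq_add_two_mul_add {d s t : ℝ} (hd : 0 ≤ d) (ht : 0 ≤ t)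
    (hst : s ^ 2 - t ^ 2 ≤ 2 * d * s + 2 * d ^ 2 / 3) :
    s ^ 2 ≤ t ^ 2 + 2 * d * t + 6 * d ^ 2 := by
  have hle : s - d ≤ t + 4 / 3 * d := by
    refine le_of_sq_le_sq ?_ (by positivity)
    nlinarith [sq_nonneg d, mul_nonneg hd ht]
  nlinarith [mul_le_mul_of_nonneg_left hle hd, sq_nonneg d]

/-- deterministic inversion of the Bernstein-type deviation bound.
If the empirical frequency `ν` of a bin (out of `m` samples) deviates from the true
probability `h` by at most `√(2uh/m) + u/(3m)`, then
`ν − √(2uν/m) ≤ h ≤ ν + √(2uν/m) + 3u/m`. -/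
theorem stmt_18
    (u m h ν : ℝ) (hu : 0 < u) (hm : 0 < m) (hh : 0 ≤ h) (hν : 0 ≤ ν)
    (hdev : |ν - h| ≤ Real.sqrt (2 * u * h / m) + u / (3 * m)) :
    ν - Real.sqrt (2 * u * ν / m) ≤ h ∧
      h ≤ ν + Real.sqrt (2 * u * ν / m) + 3 * u / m := by
  obtain ⟨d, hd, hdu⟩ : ∃ d : ℝ, 0 ≤ d ∧ u = 2 * d ^ 2 * m :=
    ⟨√(u / (2 * m)), Real.sqrt_nonneg _, by rw [Real.sq_sqrt (by positivity)]; field_simp⟩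
  obtain ⟨s, hs, rfl⟩ : ∃ s : ℝ, 0 ≤ s ∧ s ^ 2 = h := ⟨√h, Real.sqrt_nonneg _, Real.sq_sqrt hh⟩
  obtain ⟨t, ht, rfl⟩ : ∃ t : ℝ, 0 ≤ t ∧ t ^ 2 = ν := ⟨√ν, Real.sqrt_nonneg _, Real.sq_sqrt hν⟩
  have hsqrt : ∀ x : ℝ, 0 ≤ x → √(2 * u * x ^ 2 / m) = 2 * d * x := fun x hx => by
    rw [show 2 * u * x ^ 2 / m = (2 * d * x) ^ 2 by rw [hdu]; field_simp]
    exact Real.sqrt_sq (by positivity)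
  have hthird : u / (3 * m) = 2 * d ^ 2 / 3 := by rw [hdu]; field_simp
  have hthree : 3 * u / m = 6 * d ^ 2 := by rw [hdu]; field_simp; ring
  rw [hsqrt s hs, hthird, abs_le] at hdev
  rw [hsqrt t ht, hthree]
  exact ⟨sq_sub_two_mul_le_sq hd hs ht hdev.2, sq_le_sq_add_two_mul_add hd ht (by linarith)⟩
end
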